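/- Let T be a tournament with strong components D_1, …, D_k, and let X be the geodetic or the P3* convexity. Then the interval and hull numbers of T are additive over strong components: in_X(T) = Σ_{i=1}^k in_X(D_i) and hn_X(T) = Σ_{i=1}^k hn_X(D_i). -/

import Mathlib

/-! Basic machinery for convexity on oriented graphs. -/

/-- A directed walk along the arc relation `A` from `u` to `v`,
recorded as the (nonempty) list of its vertices. Its length is `l.length - 1`. -/
def DiWalk {V : Type*} (A : V → V → Prop) (u v : V) (l : List V) : Prop :=
  l.head? = some u ∧ l.getLast? = some v ∧ l.Chain' A

/-- A shortest directed walk (geodesic) from `u` to `v`: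
a directed walk of minimum length among all directed `(u,v)`-walks. -/
def IsGeodesic {V : Type*} (A : V → V → Prop) (u v : V) (l : List V) : Prop :=
  DiWalk A u v l ∧ ∀ l', DiWalk A u v l' → l.length ≤ l'.length

/-- Geodetic interval: `u`, `v`, and all vertices lying on a shortest directed
`(u,v)`-path or on a shortest directed `(v,u)`-path. -/
def geoInterval {V : Type*} (A : V → V → Prop) (u v : V) : Set V :=
  {u, v} ∪ {w | (∃ l, IsGeodesic A u v l ∧ w ∈ l) ∨ (∃ l, IsGeodesic A v u l ∧ w ∈ l)}

/-- P3 interval: `u`, `v`, and all vertices lying on a directed `(u,v)`- or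
`(v,u)`-path of length two. -/
def p3Interval {V : Type*} (A : V → V → Prop) (u v : V) : Set V :=
  {u, v} ∪ {w | (A u w ∧ A w v) ∨ (A v w ∧ A w u)}

/-- P3* interval: `u`, `v`, and all vertices lying on a shortest directed `(u,v)`- or
`(v,u)`-path of length two (i.e. the corresponding endpoints are not adjacent). -/
def p3sInterval {V : Type*} (A : V → V → Prop) (u v : V) : Set V :=
  {u, v} ∪ {w | (A u w ∧ A w v ∧ ¬ A u v) ∨ (A v w ∧ A w u ∧ ¬ A v u)}

/-- A set is convex for the interval function `I` if it is closed under `I`. -/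
def IsConvexSet {V : Type*} (I : V → V → Set V) (C : Set V) : Prop :=
  ∀ u ∈ C, ∀ v ∈ C, I u v ⊆ C

/-- The convex hull of `S`: the smallest convex set containing `S`. -/
def convexHullD {V : Type*} (I : V → V → Set V) (S : Set V) : Set V :=
  ⋂₀ {C | IsConvexSet I C ∧ S ⊆ C}

/-- `S` is an interval set if applying `I` to pairs of `S` covers all vertices. -/
def IsIntervalSet {V : Type*} (I : V → V → Set V) (S : Set V) : Prop :=
  (⋃ u ∈ S, ⋃ v ∈ S, I u v) = Set.univ

/-- `S` is a hull set if its convex hull is the whole vertex set. -/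
def IsHullSet {V : Type*} (I : V → V → Set V) (S : Set V) : Prop :=
  convexHullD I S = Set.univ

/-- The interval number: minimum cardinality of an interval set. -/
noncomputable def intervalNumber {V : Type*} (I : V → V → Set V) : ℕ :=
  sInf {k | ∃ S : Set V, IsIntervalSet I S ∧ S.ncard = k}

/-- The hull number: minimum cardinality of a hull set. -/
noncomputable def hullNumber {V : Type*} (I : V → V → Set V) : ℕ :=
  sInf {k | ∃ S : Set V, IsHullSet I S ∧ S.ncard = k}

/-- `v` is reachable from `u` by a directed walk. -/
def Reach {V : Type*} (A : V → V → Prop) (u v : V) : Prop :=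
  ∃ l, DiWalk A u v l

/-- An oriented graph: no loops and at most one arc between any two vertices. -/
def IsOriented {V : Type*} (A : V → V → Prop) : Prop :=
  ∀ u v, A u v → ¬ A v u

/-- Strong connectivity. -/
def StronglyConnected {V : Type*} (A : V → V → Prop) : Prop :=
  ∀ u v, Reach A u v

/-- Connectivity of the underlying undirected graph. -/
def ConnectedD {V : Type*} (A : V → V → Prop) : Prop :=
  ∀ u v : V, Reach (fun a b => A a b ∨ A b a) u v

/-- A strong component: an equivalence class of mutual reachability. -/
def IsStrongComponent {V : Type*} (A : V → V → Prop) (C : Set V) : Prop :=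
  ∃ v, C = {u | Reach A u v ∧ Reach A v u}

/-- A sink strong component: a strong component with no arc leaving it. -/
def IsSinkComponent {V : Type*} (A : V → V → Prop) (C : Set V) : Prop :=
  IsStrongComponent A C ∧ ∀ u ∈ C, ∀ w, w ∉ C → ¬ A u w

/-- A source strong component: a strong component with no arc entering it. -/
def IsSourceComponent {V : Type*} (A : V → V → Prop) (C : Set V) : Prop :=
  IsStrongComponent A C ∧ ∀ u ∈ C, ∀ w, w ∉ C → ¬ A w u

/-- The out-section of `u`: all vertices reachable from `u`. -/
def outSection {V : Type*} (A : V → V → Prop) (u : V) : Set V :=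
  {w | Reach A u w}

/-- The in-section of `u`: all vertices from which `u` is reachable. -/
def inSection {V : Type*} (A : V → V → Prop) (u : V) : Set V :=
  {w | Reach A w u}

/-- A tournament: an oriented graph where every two distinct vertices are adjacent. -/
def IsTournament {V : Type*} (A : V → V → Prop) : Prop :=
  (∀ u v, A u v → ¬ A v u) ∧ ∀ u v : V, u ≠ v → A u v ∨ A v u

/-- The number of arcs of the digraph given by `A`. -/
noncomputable def arcCount {V : Type*} (A : V → V → Prop) : ℕ :=
  Nat.card {p : V × V // A p.1 p.2}

section aux
open Classical

theorem aux_reach_of_rtg {V : Type*} {A : V → V → Prop} {u v : V}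
    (h : Relation.ReflTransGen A u v) : Reach A u v := by
  induction h using Relation.ReflTransGen.head_induction_on with
  | refl => exact ⟨[v], rfl, rfl, List.IsChain.singleton v⟩
  | @head a c hab _ ih =>
    obtain ⟨l, h1, h2, h3⟩ := ih
    cases l with
    | nil => simp at h1
    | cons x t =>
      simp at h1
      subst h1
      refine ⟨a :: x :: t, by simp, ?_, ?_⟩
      · rw [List.getLast?_cons_cons]; exact h2
      · exact List.IsChain.cons_cons hab h3

theorem aux_rtg_walk {V : Type*} {A : V → V → Prop} {v : V} (l : List V) :
    ∀ u w, DiWalk A u v l → w ∈ l → Relation.ReflTransGen A u w ∧ Relation.ReflTransGen A w v := by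
  induction l with
  | nil => intro u w h; simp [DiWalk] at h
  | cons x t ih =>
    rintro u w ⟨h1, h2, h3⟩ hw
    simp at h1
    subst h1
    cases t with
    | nil =>
      simp at h2 hw
      subst h2 hw
      exact ⟨.refl, .refl⟩
    | cons y t =>
      rw [List.getLast?_cons_cons] at h2
      have h3' : List.IsChain A (x :: y :: t) := h3
      rw [List.isChain_cons_cons] at h3'
      have hd : DiWalk A y v (y :: t) := ⟨by simp, h2, h3'.2⟩
      rcases List.mem_cons.1 hw with rfl | hw
      · exact ⟨.refl, .head h3'.1 (ih y y hd (by simp)).2⟩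
      · exact ⟨.head h3'.1 (ih y w hd hw).1, (ih y w hd hw).2⟩

theorem aux_reach_iff {V : Type*} {A : V → V → Prop} {u v : V} :
    Reach A u v ↔ Relation.ReflTransGen A u v := by
  refine ⟨?_, aux_reach_of_rtg⟩
  rintro ⟨l, h⟩
  have : u ∈ l := List.mem_of_mem_head? (by rw [h.1]; rfl)
  exact (aux_rtg_walk l u u h this).2

theorem aux_walk_map {V : Type*} {A : V → V → Prop} {C : Set V} (u v : C) (l : List C) :
    DiWalk (fun a b : C => A a.1 b.1) u v l ↔ DiWalk A u.1 v.1 (l.map Subtype.val) := by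
  unfold DiWalk
  refine and_congr ?_ (and_congr ?_ ?_)
  · cases l <;> simp [Subtype.ext_iff]
  · rw [List.getLast?_map]
    cases l.getLast? <;> simp [Subtype.ext_iff]
  · exact (List.isChain_map (R := A) Subtype.val).symm

/-- `C` is path-closed: closed under taking vertices on walks. -/
def AuxClosed {V : Type*} (A : V → V → Prop) (C : Set V) : Prop :=
  ∀ u ∈ C, ∀ v ∈ C, ∀ w, Relation.ReflTransGen A u w → Relation.ReflTransGen A w v → w ∈ C

theorem aux_lift {V : Type*} {A : V → V → Prop} {C : Set V} (hC : AuxClosed A C) (u v : C)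
    (l : List V) (h : DiWalk A u.1 v.1 l) :
    ∃ l' : List C, l'.map Subtype.val = l ∧ DiWalk (fun a b : C => A a.1 b.1) u v l' := by
  have hm : ∀ w ∈ l, w ∈ C := fun w hw =>
    hC _ u.2 _ v.2 w (aux_rtg_walk l _ _ h hw).1 (aux_rtg_walk l _ _ h hw).2
  refine ⟨l.attach.map (fun x => ⟨x.1, hm x.1 x.2⟩), ?_, ?_⟩
  · simp
  · rw [aux_walk_map]; simpa using h

theorem aux_geod {V : Type*} {A : V → V → Prop} {C : Set V} (hC : AuxClosed A C) (u v : C)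
    (w : V) : (∃ l, IsGeodesic A u.1 v.1 l ∧ w ∈ l) ↔
      ∃ x : C, x.1 = w ∧ ∃ l, IsGeodesic (fun a b : C => A a.1 b.1) u v l ∧ x ∈ l := by
  constructor
  · rintro ⟨l, ⟨h1, h2⟩, hw⟩
    obtain ⟨l', rfl, h'⟩ := aux_lift hC u v l h1
    obtain ⟨x, hx, rfl⟩ := List.mem_map.1 hw
    refine ⟨x, rfl, l', ⟨h', fun m hm => ?_⟩, hx⟩
    simpa using h2 _ ((aux_walk_map u v m).1 hm)
  · rintro ⟨x, rfl, l, ⟨h1, h2⟩, hx⟩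
    refine ⟨l.map Subtype.val, ⟨(aux_walk_map u v l).1 h1, fun m hm => ?_⟩,
      List.mem_map_of_mem hx⟩
    obtain ⟨m', rfl, h'⟩ := aux_lift hC u v m hm
    simpa using h2 _ h'

/-- Abstract setting. -/
structure AuxSum {V : Type*} {k : ℕ} (D : Fin k → Set V) (I : V → V → Set V)
    (J : ∀ i, D i → D i → Set (D i)) : Prop where
  part : ∀ v, ∃! i, v ∈ D i
  same : ∀ i (u v : D i), I u.1 v.1 = Subtype.val '' J i u v
  diff : ∀ i j u v, u ∈ D i → v ∈ D j → i ≠ j → I u v ⊆ {u, v}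
  self : ∀ u, u ∈ I u u

variable {V : Type*} {k : ℕ} {D : Fin k → Set V} {I : V → V → Set V}
    {J : ∀ i, D i → D i → Set (D i)}

theorem AuxSum.interval (h : AuxSum D I J) (S : Set V) :
    IsIntervalSet I S ↔ ∀ i, IsIntervalSet (J i) (Subtype.val ⁻¹' S) := by
  simp only [IsIntervalSet, Set.eq_univ_iff_forall, Set.mem_iUnion, Set.mem_preimage, exists_prop]
  constructor
  · rintro H i x
    obtain ⟨u, hu, v, hv, hx⟩ := H x.1
    have hself : ∀ y : D i, y ∈ J i y y := by
      intro y
      have := h.self y.1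
      rw [h.same i y y] at this
      obtain ⟨z, hz, hzy⟩ := this
      rwa [Subtype.ext hzy] at hz
    by_cases hxS : x.1 ∈ S
    · exact ⟨x, hxS, x, hxS, hself x⟩
    obtain ⟨a, ha, -⟩ := h.part u
    obtain ⟨b, hb, -⟩ := h.part v
    by_cases hab : a = b
    · subst hab
      have hx' := hx
      rw [h.same a ⟨u, ha⟩ ⟨v, hb⟩] at hx'
      obtain ⟨z, hz, hzx⟩ := hx'
      have : a = i := (h.part x.1).unique (hzx ▸ z.2) x.2
      subst this
      obtain rfl := Subtype.ext hzx
      exact ⟨⟨u, ha⟩, hu, ⟨v, hb⟩, hv, hz⟩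
    · rcases h.diff a b u v ha hb hab hx with rfl | rfl <;> contradiction
  · intro H x
    obtain ⟨i, hi, -⟩ := h.part x
    obtain ⟨u, hu, v, hv, hx⟩ := H i ⟨x, hi⟩
    refine ⟨u, hu, v, hv, ?_⟩
    rw [h.same]
    exact ⟨_, hx, rfl⟩

theorem AuxSum.convex (h : AuxSum D I J) (S : Set V) :
    IsConvexSet I S ↔ ∀ i, IsConvexSet (J i) (Subtype.val ⁻¹' S) := by
  constructor
  · intro H i u hu v hv x hx
    apply H u hu v hv
    rw [h.same]
    exact ⟨_, hx, rfl⟩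
  · intro H u hu v hv x hx
    obtain ⟨a, ha, -⟩ := h.part u
    obtain ⟨b, hb, -⟩ := h.part v
    by_cases hab : a = b
    · subst hab
      rw [h.same a ⟨u, ha⟩ ⟨v, hb⟩] at hx
      obtain ⟨z, hz, rfl⟩ := hx
      exact H a ⟨u, ha⟩ hu ⟨v, hb⟩ hv hz
    · rcases h.diff a b u v ha hb hab hx with rfl | rfl <;> assumption

theorem aux_hull_iff {W : Type*} (I : W → W → Set W) (S : Set W) :
    IsHullSet I S ↔ ∀ C, IsConvexSet I C → S ⊆ C → ∀ x, x ∈ C := by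
  simp only [IsHullSet, convexHullD, Set.eq_univ_iff_forall, Set.mem_sInter, Set.mem_ofPred_eq]
  exact ⟨fun H C h1 h2 x => H x C ⟨h1, h2⟩, fun H x C h => H C h.1 h.2 x⟩

theorem aux_glue (hp : ∀ v, ∃! i, v ∈ D i) (C : ∀ i, Set (D i)) :
    ∃ S : Set V, ∀ i, Subtype.val ⁻¹' S = C i := by
  refine ⟨⋃ i, Subtype.val '' C i, fun i => ?_⟩
  ext x
  simp only [Set.mem_preimage, Set.mem_iUnion, Set.mem_image]
  constructor
  · rintro ⟨j, y, hy, hyx⟩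
    have : j = i := (hp x.1).unique (hyx ▸ y.2) x.2
    subst this
    rwa [Subtype.ext hyx] at hy
  · intro hx
    exact ⟨i, x, hx, rfl⟩

theorem AuxSum.hull (h : AuxSum D I J) (S : Set V) :
    IsHullSet I S ↔ ∀ i, IsHullSet (J i) (Subtype.val ⁻¹' S) := by
  simp only [aux_hull_iff]
  constructor
  · intro H i C hC hS x
    obtain ⟨T, hT⟩ := aux_glue h.part
      (fun j => if e : j = i then e ▸ C else Set.univ)
    have hTi : Subtype.val ⁻¹' T = C := by simpa using hT i
    have : x.1 ∈ T := by
      refine H T ((h.convex T).2 fun j => ?_) (fun s hs => ?_) x.1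
      · by_cases e : j = i
        · subst e; rw [hTi]; exact hC
        · rw [hT j, dif_neg e]; intro u _ v _ ; exact Set.subset_univ _
      · obtain ⟨j, hj, -⟩ := h.part s
        have : (⟨s, hj⟩ : D j) ∈ Subtype.val ⁻¹' T := by
          by_cases e : j = i
          · subst e; rw [hTi]; exact hS hs
          · rw [hT j, dif_neg e]; trivial
        exact this
    rw [← hTi]; exact this
  · intro H C hC hS x
    obtain ⟨i, hi, -⟩ := h.part x
    exact H i (Subtype.val ⁻¹' C) ((h.convex C).1 hC i) (fun y hy => hS hy) ⟨x, hi⟩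

theorem aux_ncard [Finite V] (hp : ∀ v, ∃! i, v ∈ D i) (S : Set V) :
    S.ncard = ∑ i, (Subtype.val ⁻¹' S : Set (D i)).ncard := by
  have e : S ≃ Σ i, (Subtype.val ⁻¹' S : Set (D i)) :=
    { toFun := fun s => ⟨(hp s.1).choose, ⟨⟨s.1, (hp s.1).choose_spec.1⟩, s.2⟩⟩
      invFun := fun p => ⟨p.2.1.1, p.2.2⟩
      left_inv := fun s => rfl
      right_inv := by
        rintro ⟨i, ⟨⟨x, hx⟩, hs⟩⟩
        have : (hp x).choose = i := (hp x).unique (hp x).choose_spec.1 hx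
        subst this
        rfl }
  simp only [← Nat.card_coe_set_eq]
  rw [Nat.card_congr e, Nat.card_sigma]

theorem aux_sum_inf [Finite V] (hp : ∀ v, ∃! i, v ∈ D i) (P : Set V → Prop)
    (Q : ∀ i, Set (D i) → Prop) (h : ∀ S, P S ↔ ∀ i, Q i (Subtype.val ⁻¹' S))
    (hu : P Set.univ) :
    sInf {n | ∃ S, P S ∧ S.ncard = n} = ∑ i, sInf {n | ∃ S, Q i S ∧ S.ncard = n} := by
  apply le_antisymm
  · have hne : ∀ i, {n | ∃ S, Q i S ∧ S.ncard = n}.Nonempty :=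
      fun i => ⟨_, _, (h _).1 hu i, rfl⟩
    choose C hC hn using fun i => Nat.sInf_mem (hne i)
    obtain ⟨S, hS⟩ := aux_glue hp C
    apply Nat.sInf_le
    refine ⟨S, (h S).2 fun i => by rw [hS]; exact hC i, ?_⟩
    rw [aux_ncard hp S]
    exact Finset.sum_congr rfl fun i _ => by rw [hS, hn]
  · have hne : {n | ∃ S, P S ∧ S.ncard = n}.Nonempty := ⟨_, _, hu, rfl⟩
    obtain ⟨S, hS, hn⟩ := Nat.sInf_mem hne
    rw [← hn, aux_ncard hp S]
    exact Finset.sum_le_sum fun i _ => Nat.sInf_le ⟨_, (h S).1 hS i, rfl⟩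

theorem AuxSum.main [Finite V] (h : AuxSum D I J) :
    intervalNumber I = ∑ i, intervalNumber (J i) ∧ hullNumber I = ∑ i, hullNumber (J i) := by
  refine ⟨aux_sum_inf h.part _ _ h.interval ?_, aux_sum_inf h.part _ _ h.hull ?_⟩
  · rw [IsIntervalSet, Set.eq_univ_iff_forall]
    intro x
    simp only [Set.mem_iUnion]
    exact ⟨x, trivial, x, trivial, h.self x⟩
  · rw [aux_hull_iff]
    intro C _ hC x
    exact hC trivial

theorem aux_geo_le {A : V → V → Prop} {u v : V} (ha : A u v) (l : List V)
    (h : IsGeodesic A u v l) (w : V) (hw : w ∈ l) : w = u ∨ w = v := by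
  obtain ⟨⟨h1, h2, -⟩, h4⟩ := h
  have h5 := h4 [u, v] ⟨rfl, rfl, by
    show List.IsChain A [u, v]
    simpa using ha⟩
  match l, h1, h2, h5, hw with
  | [], h1, _, _, _ => simp at h1
  | [x], h1, _, _, hw => simp at h1 hw; subst h1; exact Or.inl hw
  | [x, y], h1, h2, _, hw => simp at h1 h2 hw; subst h1 h2; exact hw
  | _ :: _ :: _ :: _, _, _, h5, _ => simp at h5

end aux

/-- For a tournament with strong components `D_1, …, D_k`, the
interval and hull numbers in the geodetic and P3* convexities are the sums of
the corresponding numbers of the (induced) strong components. -/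
theorem stmt_9 {V : Type*} [Finite V] (A : V → V → Prop) (hT : IsTournament A)
    (k : ℕ) (D : Fin k → Set V)
    (hD : ∀ i, IsStrongComponent A (D i))
    (hall : ∀ C : Set V, IsStrongComponent A C → ∃ i, D i = C)
    (hinj : Function.Injective D) :
    intervalNumber (geoInterval A) =
        ∑ i, intervalNumber (geoInterval (fun a b : D i => A a.1 b.1)) ∧
    hullNumber (geoInterval A) =
        ∑ i, hullNumber (geoInterval (fun a b : D i => A a.1 b.1)) ∧
    intervalNumber (p3sInterval A) =
        ∑ i, intervalNumber (p3sInterval (fun a b : D i => A a.1 b.1)) ∧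
    hullNumber (p3sInterval A) =
        ∑ i, hullNumber (p3sInterval (fun a b : D i => A a.1 b.1)) := by
  have hcl : ∀ i, AuxClosed A (D i) := by
    intro i u hu v hv w h1 h2
    obtain ⟨c, hc⟩ := hD i
    rw [hc] at hu hv ⊢
    simp only [Set.mem_ofPred_eq, aux_reach_iff] at hu hv ⊢
    exact ⟨h2.trans hv.1, hu.2.trans h1⟩
  have hmem : ∀ i u v, u ∈ D i → Relation.ReflTransGen A u v → Relation.ReflTransGen A v u →
      v ∈ D i := fun i u v hu h1 h2 => hcl i u hu u hu v h1 h2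
  have hpart : ∀ v, ∃! i, v ∈ D i := by
    intro v
    obtain ⟨i, hi⟩ := hall _ ⟨v, rfl⟩
    refine ⟨i, ?_, ?_⟩
    · show v ∈ D i
      rw [hi]
      simp only [Set.mem_ofPred_eq, aux_reach_iff]
      exact ⟨.refl, .refl⟩
    · intro j hj
      apply hinj
      rw [hi]
      obtain ⟨c, hc⟩ := hD j
      have hj' : v ∈ D j := hj
      rw [hc] at hj' ⊢
      ext x
      simp only [Set.mem_ofPred_eq, aux_reach_iff] at hj' ⊢
      exact ⟨fun h => ⟨h.1.trans hj'.2, hj'.1.trans h.2⟩,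
        fun h => ⟨h.1.trans hj'.1, hj'.2.trans h.2⟩⟩
  have hno : ∀ i j u v, u ∈ D i → v ∈ D j → i ≠ j → Relation.ReflTransGen A u v →
      Relation.ReflTransGen A v u → False := by
    intro i j u v hu hv hij h1 h2
    exact hij ((hpart v).unique (hmem i u v hu h1 h2) hv)
  have hadj : ∀ i j u v, u ∈ D i → v ∈ D j → i ≠ j → A u v ∨ A v u := by
    intro i j u v hu hv hij
    apply hT.2
    rintro rfl
    exact hno i j u u hu hv hij .refl .refl
  have hg : AuxSum D (geoInterval A) (fun i => geoInterval (fun a b : D i => A a.1 b.1)) := by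
    refine ⟨hpart, ?_, ?_, fun u => by simp [geoInterval]⟩
    · intro i u v
      ext w
      simp only [geoInterval, Set.mem_union, Set.mem_ofPred_eq, aux_geod (hcl i), Set.mem_image,
        Set.mem_insert_iff, Set.mem_singleton_iff]
      constructor
      · rintro ((rfl | rfl) | ⟨x, rfl, h⟩ | ⟨x, rfl, h⟩)
        · exact ⟨u, by simp⟩
        · exact ⟨v, by simp⟩
        · exact ⟨x, Or.inr (Or.inl h), rfl⟩
        · exact ⟨x, Or.inr (Or.inr h), rfl⟩
      · rintro ⟨x, ((rfl | rfl) | h | h), rfl⟩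
        · simp
        · simp
        · exact Or.inr (Or.inl ⟨x, rfl, h⟩)
        · exact Or.inr (Or.inr ⟨x, rfl, h⟩)
    · rintro i j u v hu hv hij w (hw | ⟨l, hl, hw⟩ | ⟨l, hl, hw⟩)
      · exact hw
      · rcases hadj i j u v hu hv hij with ha | ha
        · exact aux_geo_le ha l hl w hw
        · exact (hno i j u v hu hv hij (aux_reach_iff.1 ⟨l, hl.1⟩) (.single ha)).elim
      · rcases hadj i j u v hu hv hij with ha | ha
        · exact (hno i j u v hu hv hij (.single ha) (aux_reach_iff.1 ⟨l, hl.1⟩)).elim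
        · exact (aux_geo_le ha l hl w hw).symm
  have hp : AuxSum D (p3sInterval A) (fun i => p3sInterval (fun a b : D i => A a.1 b.1)) := by
    refine ⟨hpart, ?_, ?_, fun u => by simp [p3sInterval]⟩
    · intro i u v
      ext w
      simp only [p3sInterval, Set.mem_union, Set.mem_ofPred_eq, Set.mem_image,
        Set.mem_insert_iff, Set.mem_singleton_iff]
      constructor
      · rintro ((rfl | rfl) | h | h)
        · exact ⟨u, by simp⟩
        · exact ⟨v, by simp⟩
        · exact ⟨⟨w, hcl i u u.2 v v.2 w (.single h.1) (.single h.2.1)⟩, Or.inr (Or.inl h), rfl⟩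
        · exact ⟨⟨w, hcl i v v.2 u u.2 w (.single h.1) (.single h.2.1)⟩, Or.inr (Or.inr h), rfl⟩
      · rintro ⟨x, ((rfl | rfl) | h | h), rfl⟩
        · simp
        · simp
        · exact Or.inr (Or.inl h)
        · exact Or.inr (Or.inr h)
    · rintro i j u v hu hv hij w (hw | ⟨h1, h2, h3⟩ | ⟨h1, h2, h3⟩)
      · exact hw
      · have ha := (hadj i j u v hu hv hij).resolve_left h3
        exact (hno i j u v hu hv hij (.head h1 (.single h2)) (.single ha)).elim
      · have ha := (hadj i j u v hu hv hij).resolve_right h3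
        exact (hno i j u v hu hv hij (.single ha) (.head h1 (.single h2))).elim
  exact ⟨hg.main.1, hg.main.2, hp.main.1, hp.main.2⟩
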